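/- Let (S,d) be a Busemann surface and let x, y ∈ S be distinct points. Then the cone C(x,y) = {z ∈ S : x ∈ [y,z]} is a convex and closed subset of S. -/

import Mathlib

open Metric Set MeasureTheory

/-- `γ` is a geodesic on the interval `[a, b]`. -/
def IsGeodesicOn {S : Type*} [MetricSpace S] (γ : ℝ → S) (a b : ℝ) : Prop :=
  ∀ s ∈ Set.Icc a b, ∀ t ∈ Set.Icc a b, dist (γ s) (γ t) = |s - t|

/-- `γ` is a geodesic from `x` to `y`. -/
def IsGeodesicFromTo {S : Type*} [MetricSpace S] (γ : ℝ → S) (x y : S) : Prop :=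
  IsGeodesicOn γ 0 (dist x y) ∧ γ 0 = x ∧ γ (dist x y) = y

/-- A geodesic metric space: every pair of points is joined by a geodesic. -/
def IsGeodesicMetricSpace (S : Type*) [MetricSpace S] : Prop :=
  ∀ x y : S, ∃ γ : ℝ → S, IsGeodesicFromTo γ x y

/-- A Busemann space: a geodesic metric space in which the distance function between
any two geodesics is convex. -/
def IsBusemannSpace (S : Type*) [MetricSpace S] : Prop :=
  IsGeodesicMetricSpace S ∧
    ∀ (γ γ' : ℝ → S) (a b a' b' : ℝ), a ≤ b → a' ≤ b' →
      IsGeodesicOn γ a b → IsGeodesicOn γ' a' b' →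
      ConvexOn ℝ (Set.Icc (0 : ℝ) 1)
        (fun t => dist (γ ((1 - t) * a + t * b)) (γ' ((1 - t) * a' + t * b')))

/-- A Busemann surface: a Busemann space homeomorphic to the plane `ℝ²`. -/
def IsBusemannSurface (S : Type*) [MetricSpace S] : Prop :=
  IsBusemannSpace S ∧ Nonempty (S ≃ₜ (ℝ × ℝ))

/-- `G` is the image of a geodesic from `x` to `y`. -/
def IsGeodesicSegment {S : Type*} [MetricSpace S] (x y : S) (G : Set S) : Prop :=
  ∃ γ : ℝ → S, IsGeodesicFromTo γ x y ∧ G = γ '' Set.Icc 0 (dist x y)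

/-- Convexity of a set with respect to a geodesic-segment assignment `seg`. -/
def SegConvex {S : Type*} (seg : S → S → Set S) (R : Set S) : Prop :=
  ∀ p ∈ R, ∀ q ∈ R, seg p q ⊆ R

/-- The convex hull: the smallest `seg`-convex set containing `Q`. -/
def segConvexHull {S : Type*} (seg : S → S → Set S) (Q : Set S) : Set S :=
  ⋂₀ {R : Set S | SegConvex seg R ∧ Q ⊆ R}

/-- A line of `S`: the image of an isometric embedding of `ℝ` into `S`. -/
def IsLineSet {S : Type*} [MetricSpace S] (L : Set S) : Prop :=
  ∃ ℓ : ℝ → S, Isometry ℓ ∧ L = Set.range ℓ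

/-- An open halfplane determined by a line `L`: a connected component of `S \ L`. -/
def IsOpenHalfplane {S : Type*} [MetricSpace S] (L H : Set S) : Prop :=
  ∃ x, x ∉ L ∧ H = connectedComponentIn Lᶜ x

/-- A closed halfplane determined by a line `L`: an open halfplane together with `L`. -/
def IsClosedHalfplane {S : Type*} [MetricSpace S] (L H : Set S) : Prop :=
  ∃ H', IsOpenHalfplane L H' ∧ H = H' ∪ L

/-- `X` and `Y` are line-separable: they lie in different open halfplanes of some line. -/
def LineSeparable {S : Type*} [MetricSpace S] (X Y : Set S) : Prop :=
  ∃ L H₁ H₂ : Set S, IsLineSet L ∧ IsOpenHalfplane L H₁ ∧ IsOpenHalfplane L H₂ ∧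
    H₁ ≠ H₂ ∧ X ⊆ H₁ ∧ Y ⊆ H₂

/-- `X` and `Y` are weakly line-separable: they lie in different closed halfplanes of
some line. -/
def WeaklyLineSeparable {S : Type*} [MetricSpace S] (X Y : Set S) : Prop :=
  ∃ L H₁ H₂ : Set S, IsLineSet L ∧ IsClosedHalfplane L H₁ ∧ IsClosedHalfplane L H₂ ∧
    H₁ ≠ H₂ ∧ X ⊆ H₁ ∧ Y ⊆ H₂

/-- `Q` is in general position: no three distinct points of `Q` lie on a common line. -/
def InGeneralPosition {S : Type*} [MetricSpace S] (Q : Set S) : Prop :=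
  ∀ x ∈ Q, ∀ y ∈ Q, ∀ z ∈ Q, x ≠ y → y ≠ z → x ≠ z →
    ∀ L : Set S, IsLineSet L → ¬(x ∈ L ∧ y ∈ L ∧ z ∈ L)

/-- `L` is a tangent line of the set `K`. -/
def IsTangentLine {S : Type*} [MetricSpace S] (L K : Set S) : Prop :=
  IsLineSet L ∧ (K ∩ L).Nonempty ∧ ∃ H, IsClosedHalfplane L H ∧ K ⊆ H

/-- `L` is an inner bitangent of `K'` and `K''`. -/
def IsInnerBitangent {S : Type*} [MetricSpace S] (L K' K'' : Set S) : Prop :=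
  IsTangentLine L K' ∧ IsTangentLine L K'' ∧
    ∃ H₁ H₂, IsClosedHalfplane L H₁ ∧ IsClosedHalfplane L H₂ ∧ H₁ ≠ H₂ ∧
      K' ⊆ H₁ ∧ K'' ⊆ H₂

/-!
If `x ∈ [y, z₁]`, `x ∈ [y, z₂]` and `w ∈ [z₁, z₂]` but `x ∉ [y, w]`, then the segments joining `x`
and `w` to the three points `y, z₁, z₂` form a (possibly degenerate) theta graph: `[x, p]` and
`[w, q]` are disjoint whenever `p ≠ q`. In a planar theta graph, one of the three arcs between `x`
and `w` lies inside the loop formed by the other two. Here it cannot: contracting a loop along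
geodesics issued from one of its points never meets the third of the points `y, z₁, z₂`. The
enclosing is measured by the variation of a continuous logarithm.
-/

open unitInterval Function

/-! ### Variation of a continuous logarithm -/

section LogVariation

instance unitInterval_contractibleSpace : ContractibleSpace I :=
  (convex_Icc (0 : ℝ) 1).contractibleSpace ⟨0, unitInterval.zero_mem⟩

instance unitInterval_locallyPathConnectedSpace : LocallyPathConnectedSpace I :=
  (convex_Icc (0 : ℝ) 1).locallyPathConnectedSpace

theorem exists_continuous_exp_eq {A : Type*} [TopologicalSpace A] [SimplyConnectedSpace A]
    [LocallyPathConnectedSpace A] {f : A → ℂ} (hf : Continuous f) (hf₀ : ∀ a, f a ≠ 0) :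
    ∃ L : A → ℂ, Continuous L ∧ ∀ a, Complex.exp (L a) = f a := by
  obtain ⟨a₀⟩ := (inferInstance : Nonempty A)
  obtain ⟨L, ⟨-, hL⟩, -⟩ := Complex.isCoveringMapOn_exp.existsUnique_continuousMap_lifts
    ⟨f, hf⟩ (Complex.exp_log (hf₀ a₀)) hf₀
  exact ⟨L, L.continuous, congrFun hL⟩

theorem sub_eq_sub_of_exp_eq_exp {A : Type*} [TopologicalSpace A] [PreconnectedSpace A]
    {L M : A → ℂ} (hL : Continuous L) (hM : Continuous M)
    (h : ∀ a, Complex.exp (L a) = Complex.exp (M a)) (a b : A) : L a - L b = M a - M b := by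
  have exp_sub_eq_one (c : A) : Complex.exp (L c - M c) = 1 := by
    rw [Complex.exp_sub, h, div_self (Complex.exp_ne_zero _)]
  have sub_const : L a - M a = L b - M b :=
    Complex.isCoveringMap_exp.const_of_comp (hL.sub hM)
      (fun c d ↦ Subtype.ext ((exp_sub_eq_one c).trans (exp_sub_eq_one d).symm)) a b
  linear_combination sub_const

open Classical in
/-- The variation `log f(1) - log f(0)` along `f : I → ℂ`, where `log f` is a continuous branch
of the logarithm of `f`. If there is no such branch, the value is `0`. For a closed path avoiding
`c`, the variation of `γ - c` is `2πi` times the winding number of `γ` around `c`. -/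
noncomputable def logVariation (f : I → ℂ) : ℂ :=
  if h : ∃ L : I → ℂ, Continuous L ∧ ∀ s, Complex.exp (L s) = f s then
    h.choose 1 - h.choose 0
  else 0

theorem logVariation_eq_sub {f L : I → ℂ} (hL : Continuous L)
    (h : ∀ s, Complex.exp (L s) = f s) : logVariation f = L 1 - L 0 := by
  have hex : ∃ L : I → ℂ, Continuous L ∧ ∀ s, Complex.exp (L s) = f s := ⟨L, hL, h⟩
  rw [logVariation, dif_pos hex]
  exact sub_eq_sub_of_exp_eq_exp hex.choose_spec.1 hL
    (fun s ↦ (hex.choose_spec.2 s).trans (h s).symm) 1 0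

theorem logVariation_const (c : ℂ) : logVariation (fun _ ↦ c) = 0 := by
  by_cases h : ∃ L : I → ℂ, Continuous L ∧ ∀ s, Complex.exp (L s) = c
  · obtain ⟨L, -, hL⟩ := h
    rw [logVariation_eq_sub continuous_const (fun _ ↦ hL 0), sub_self]
  · exact dif_neg h

theorem exp_logVariation {f : I → ℂ} (hf : Continuous f) (hf₀ : ∀ s, f s ≠ 0) :
    Complex.exp (logVariation f) = f 1 / f 0 := by
  obtain ⟨L, hL, h⟩ := exists_continuous_exp_eq hf hf₀
  rw [logVariation_eq_sub hL h, Complex.exp_sub, h, h]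

theorem exp_logVariation_path_sub {a b c : ℂ} (γ : Path a b) (hγ : ∀ s, γ s ≠ c) :
    Complex.exp (logVariation (γ · - c)) = (b - c) / (a - c) := by
  simpa using exp_logVariation (f := (γ · - c)) (by fun_prop) (fun s ↦ sub_ne_zero.2 (hγ s))

theorem logVariation_neg {f : I → ℂ} (hf : Continuous f) (hf₀ : ∀ s, f s ≠ 0) :
    logVariation (fun s ↦ -f s) = logVariation f := by
  obtain ⟨L, hL, h⟩ := exists_continuous_exp_eq hf hf₀
  have h_neg (s : I) : Complex.exp (L s + Real.pi * Complex.I) = -f s := by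
    rw [Complex.exp_add, Complex.exp_pi_mul_I, h, mul_neg_one]
  rw [logVariation_eq_sub hL h, logVariation_eq_sub (by fun_prop) h_neg,
    add_sub_add_right_eq_sub]

theorem logVariation_comp_symm {f : I → ℂ} (hf : Continuous f) (hf₀ : ∀ s, f s ≠ 0) :
    logVariation (fun s ↦ f (σ s)) = -logVariation f := by
  obtain ⟨L, hL, h⟩ := exists_continuous_exp_eq hf hf₀
  rw [logVariation_eq_sub hL h, logVariation_eq_sub (hL.comp continuous_symm) (fun s ↦ h (σ s))]
  simp

theorem logVariation_square {F : I → I → ℂ} (hF : Continuous fun a : I × I ↦ F a.1 a.2)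
    (hF₀ : ∀ s t, F s t ≠ 0) :
    logVariation (F · 0) + logVariation (F 1) = logVariation (F 0) + logVariation (F · 1) := by
  obtain ⟨L, hL, h⟩ := exists_continuous_exp_eq hF (fun a ↦ hF₀ a.1 a.2)
  rw [logVariation_eq_sub (f := (F · 0)) (hL.comp (.prodMk_left 0)) (fun s ↦ h (s, 0)),
    logVariation_eq_sub (f := F 1) (hL.comp (.prodMk_right 1)) (fun t ↦ h (1, t)),
    logVariation_eq_sub (f := F 0) (hL.comp (.prodMk_right 0)) (fun t ↦ h (0, t)),
    logVariation_eq_sub (f := (F · 1)) (hL.comp (.prodMk_left 1)) (fun s ↦ h (s, 1))]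
  simp only [comp_apply]
  ring

theorem logVariation_disjoint_paths {α β : I → ℂ} (hα : Continuous α) (hβ : Continuous β)
    (hd : ∀ s t, α s ≠ β t) :
    logVariation (α · - β 0) + logVariation (β · - α 1) =
      logVariation (β · - α 0) + logVariation (α · - β 1) := by
  have swap (s : I) : logVariation (α s - β ·) = logVariation (β · - α s) := by
    simpa only [neg_sub] using logVariation_neg (f := (β · - α s)) (by fun_prop)
      (fun t ↦ sub_ne_zero.2 (hd s t).symm)
  have square := logVariation_square (F := fun s t ↦ α s - β t)
    (by fun_prop) (fun s t ↦ sub_ne_zero.2 (hd s t))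
  rwa [swap, swap] at square

end LogVariation

/-! ### Planar theta graphs -/

section Theta

variable {x w : ℂ} {p : Fin 3 → ℂ}

theorem sum_logVariation_sub_ne_zero (β : ∀ i, Path w (p i))
    (hβ : ∀ i j, i ≠ j → ∀ s, β i s ≠ p j) :
    ∑ k, (logVariation (β (k + 1) · - p k) - logVariation (β (k + 2) · - p k)) ≠ 0 := by
  have hw (j : Fin 3) : w - p j ≠ 0 := by
    simpa [sub_eq_zero] using hβ (j + 1) j (by decide +revert) 0
  have hp {i j : Fin 3} (hij : i ≠ j) : p i - p j ≠ 0 := by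
    simpa [sub_eq_zero] using hβ i j hij 1
  have exp_term (k : Fin 3) :
      Complex.exp (logVariation (β (k + 1) · - p k) - logVariation (β (k + 2) · - p k)) =
        (p (k + 1) - p k) / (p (k + 2) - p k) := by
    have h₁ : k + 1 ≠ k := by decide +revert
    have h₂ : k + 2 ≠ k := by decide +revert
    rw [Complex.exp_sub, exp_logVariation_path_sub _ (hβ _ _ h₁),
      exp_logVariation_path_sub _ (hβ _ _ h₂), div_div_div_cancel_right₀ (hw k)]
  -- Each `p i - p j` is divided by `p j - p i`, so three signs multiply to `-1`.
  have prod_eq : ∏ k, (p (k + 1) - p k) / (p (k + 2) - p k) = -1 := by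
    have h₀₁ : p 0 - p 1 ≠ 0 := hp (by decide)
    have h₀₂ : p 0 - p 2 ≠ 0 := hp (by decide)
    have h₁₂ : p 1 - p 2 ≠ 0 := hp (by decide)
    rw [Fin.prod_univ_three]
    change (p 1 - p 0) / (p 2 - p 0) * ((p 2 - p 1) / (p 0 - p 1)) *
      ((p 0 - p 2) / (p 1 - p 2)) = -1
    rw [← neg_sub (p 0) (p 1), ← neg_sub (p 0) (p 2), ← neg_sub (p 1) (p 2)]
    field_simp
  intro sum_eq
  have exp_sum := congrArg Complex.exp sum_eq
  rw [Complex.exp_sum, Complex.exp_zero, Finset.prod_congr rfl fun k _ ↦ exp_term k,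
    prod_eq] at exp_sum
  norm_num at exp_sum

-- The difference of the two sides at `k` is the variation around `p k` along the loop
-- `x → p (k + 1) → w → p (k + 2) → x`.
theorem exists_logVariation_theta_ne (α : ∀ i, Path x (p i)) (β : ∀ i, Path w (p i))
    (hd : ∀ i j, i ≠ j → ∀ s t, α i s ≠ β j t) :
    ∃ k, logVariation (α (k + 1) · - p k) - logVariation (β (k + 1) · - p k) ≠
      logVariation (α (k + 2) · - p k) - logVariation (β (k + 2) · - p k) := by
  let A (i k : Fin 3) : ℂ := logVariation (α i · - p k)
  let B (i k : Fin 3) : ℂ := logVariation (β i · - p k)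
  by_contra! h
  have loop₀ : A 1 0 - B 1 0 = A 2 0 - B 2 0 := h 0
  have loop₁ : A 2 1 - B 2 1 = A 0 1 - B 0 1 := h 1
  have loop₂ : A 0 2 - B 0 2 = A 1 2 - B 1 2 := h 2
  have square {i j : Fin 3} (hij : i ≠ j) :
      logVariation (α i · - w) + B j i = logVariation (β j · - x) + A i j := by
    simpa [A, B] using logVariation_disjoint_paths (α i).continuous (β j).continuous (hd i j hij)
  have h₀₁ : (0 : Fin 3) ≠ 1 := by decide
  have h₀₂ : (0 : Fin 3) ≠ 2 := by decide
  have h₁₂ : (1 : Fin 3) ≠ 2 := by decide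
  have sum_B : B 1 0 - B 2 0 + (B 2 1 - B 0 1) + (B 0 2 - B 1 2) = 0 := by
    linear_combination
      (1 / 2) * (square h₀₁ - square h₀₁.symm + square h₁₂ - square h₁₂.symm +
        square h₀₂.symm - square h₀₂) - (1 / 2) * (loop₀ + loop₁ + loop₂)
  refine sum_logVariation_sub_ne_zero β (fun i j hij s hs ↦ ?_)
    ((Fin.sum_univ_three _).trans sum_B)
  exact hd j i hij.symm 1 s (by rw [hs, Path.target])

end Theta

/-! ### Bicombings of planar spaces -/

/-- A continuous reversible bicombing of a topological space: a choice of a path between any two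
points, depending continuously on its endpoints and turned into its reversal when they are
swapped. Busemann spaces carry one, made of their geodesics. -/
structure Bicombing (X : Type*) [TopologicalSpace X] where
  path (p q : X) : Path p q
  path_symm (p q : X) : (path p q).symm = path q p
  continuous_path : Continuous fun a : (X × X) × I ↦ path a.1.1 a.1.2 a.2

namespace Bicombing

variable {X : Type*} [TopologicalSpace X] (G : Bicombing X) {f : X → ℂ} {c : ℂ} {u v v' x w : X}

theorem path_path_zero (s : I) : G.path u (G.path v v' 0) s = G.path u v s :=
  congrArg (fun q ↦ G.path u q s) (G.path v v').source

theorem path_path_one (s : I) : G.path u (G.path v v' 1) s = G.path u v' s :=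
  congrArg (fun q ↦ G.path u q s) (G.path v v').target

theorem logVariation_reverse (hf : Continuous f) (hc : ∀ s, f (G.path u v s) ≠ c) :
    logVariation ((G.path v u).map hf · - c) = -logVariation ((G.path u v).map hf · - c) := by
  rw [← G.path_symm u v]
  exact logVariation_comp_symm (f := ((G.path u v).map hf · - c)) (by fun_prop)
    (fun s ↦ sub_ne_zero.2 (hc s))

-- The paths from `u` to the points of the path from `v` to `v'` fill the triangle `u v v'`.
theorem logVariation_triangle (hf : Continuous f)
    (hc : ∀ s t, f (G.path u (G.path v v' t) s) ≠ c) :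
    logVariation ((G.path u v).map hf · - c) + logVariation ((G.path v v').map hf · - c) =
      logVariation ((G.path u v').map hf · - c) := by
  have continuous_fan : Continuous fun a : I × I ↦ f (G.path u (G.path v v' a.2) a.1) - c :=
    (hf.comp (G.continuous_path.comp (by fun_prop :
      Continuous fun a : I × I ↦ ((u, G.path v v' a.2), a.1)))).sub continuous_const
  have square := logVariation_square continuous_fan (fun s t ↦ sub_ne_zero.2 (hc s t))
  simpa [logVariation_const, path_path_zero, path_path_one] using square

theorem logVariation_sub_eq_sub (hf : Continuous f)
    (hx : ∀ s t, f (G.path u (G.path x v t) s) ≠ c)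
    (hw : ∀ s t, f (G.path u (G.path w v t) s) ≠ c) :
    logVariation ((G.path x u).map hf · - c) - logVariation ((G.path w u).map hf · - c) =
      logVariation ((G.path x v).map hf · - c) - logVariation ((G.path w v).map hf · - c) := by
  have reverse_x := G.logVariation_reverse (u := u) (v := x) hf (c := c)
    (fun s ↦ by simpa only [path_path_zero] using hx s 0)
  have reverse_w := G.logVariation_reverse (u := u) (v := w) hf (c := c)
    (fun s ↦ by simpa only [path_path_zero] using hw s 0)
  linear_combination reverse_x - reverse_w + G.logVariation_triangle hf hw -
    G.logVariation_triangle hf hx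

theorem exists_forall_mem_range (hf : Continuous f) (hf_inj : Injective f) {p : Fin 3 → X}
    (hd : ∀ i j, i ≠ j → ∀ s t, G.path x (p i) s ≠ G.path w (p j) t) :
    ∃ k, ∀ i j, i ≠ k → j ≠ k → i ≠ j →
      ∃ t ∈ range (G.path x (p j)) ∪ range (G.path w (p j)), p k ∈ range (G.path (p i) t) := by
  obtain ⟨k, hk⟩ := exists_logVariation_theta_ne (fun i ↦ (G.path x (p i)).map hf)
    (fun i ↦ (G.path w (p i)).map hf) (fun i j hij s t ↦ hf_inj.ne (hd i j hij s t))
  refine ⟨k, fun i j hik hjk hij ↦ ?_⟩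
  by_contra! avoid
  have eq_ij := G.logVariation_sub_eq_sub (c := f (p k)) (u := p i) (v := p j) (x := x) (w := w) hf
    (fun s t h ↦ avoid _ (.inl ⟨t, rfl⟩) ⟨s, hf_inj h⟩)
    (fun s t h ↦ avoid _ (.inr ⟨t, rfl⟩) ⟨s, hf_inj h⟩)
  have pair_eq : ∀ i j k : Fin 3, i ≠ k → j ≠ k → i ≠ j →
      i = k + 1 ∧ j = k + 2 ∨ i = k + 2 ∧ j = k + 1 := by decide
  obtain ⟨rfl, rfl⟩ | ⟨rfl, rfl⟩ := pair_eq i j k hik hjk hij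
  · exact hk eq_ij
  · exact hk eq_ij.symm

end Bicombing

/-! ### Metric betweenness -/

/-- `q` lies metrically between `p` and `r`: the triangle inequality through `q` is an equality.
In a Busemann space this says that `q` lies on the segment `[p, r]`. -/
def MetricBtw {S : Type*} [PseudoMetricSpace S] (p q r : S) : Prop :=
  dist p q + dist q r = dist p r

namespace MetricBtw

section PseudoMetricSpace

variable {S : Type*} [PseudoMetricSpace S] {a b c d : S}

theorem symm (h : MetricBtw a b c) : MetricBtw c b a := by
  rw [MetricBtw, dist_comm c b, dist_comm b a, dist_comm c a, add_comm]
  exact h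

theorem refl_left (a b : S) : MetricBtw a a b := by simp [MetricBtw]

theorem trans_left (h₁ : MetricBtw a c d) (h₂ : MetricBtw a b c) : MetricBtw a b d := by
  unfold MetricBtw at *
  linarith [dist_triangle a b d, dist_triangle b c d]

theorem trans_right (h₁ : MetricBtw a b d) (h₂ : MetricBtw b c d) : MetricBtw a c d :=
  (h₁.symm.trans_left h₂.symm).symm

theorem trans_left_right (h₁ : MetricBtw a c d) (h₂ : MetricBtw a b c) : MetricBtw b c d := by
  unfold MetricBtw at *
  linarith [dist_triangle a b d, dist_triangle b c d]

theorem trans_right_left (h₁ : MetricBtw a b d) (h₂ : MetricBtw b c d) : MetricBtw a b c :=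
  (h₁.symm.trans_left_right h₂.symm).symm

end PseudoMetricSpace

section Cone

variable {S : Type*} [MetricSpace S] {x y z z₁ z₂ w m t : S}

theorem antisymm (h₁ : MetricBtw x m z) (h₂ : MetricBtw m x z) : x = m := by
  unfold MetricBtw at *
  exact dist_le_zero.1 (by linarith [dist_comm x m])

theorem of_meet_crosswise (h₁ : MetricBtw y x z₁) (hw : MetricBtw z₁ w z₂)
    (hxm : MetricBtw x m z₁) (hwm : MetricBtw w m z₂) : MetricBtw y x w :=
  have mwz₁ : MetricBtw m w z₁ := (hw.trans_right_left hwm).symm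
  h₁.trans_right_left (hxm.trans_right mwz₁)

theorem of_meet_apex (h₁ : MetricBtw y x z₁) (hxm : MetricBtw x m z₁) (hwm : MetricBtw w m y) :
    MetricBtw y x w :=
  hwm.symm.trans_left (h₁.trans_right_left hxm)

theorem of_meet_base (h₁ : MetricBtw y x z₁) (h₂ : MetricBtw y x z₂) (hw : MetricBtw z₁ w z₂)
    (hxm : MetricBtw x m y) (hwm : MetricBtw w m z₁) : MetricBtw y x w := by
  have z₁xm : MetricBtw z₁ x m := h₁.symm.trans_right_left hxm
  have mxz₂ : MetricBtw m x z₂ := (h₂.symm.trans_right_left hxm).symm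
  have z₁mz₂ : MetricBtw z₁ m z₂ := hw.trans_left hwm.symm
  obtain rfl : x = m := (z₁mz₂.trans_left_right z₁xm).antisymm mxz₂
  exact h₂.trans_right_left (hw.trans_left_right hwm.symm)

theorem of_meet_of_ne (h₁ : MetricBtw y x z₁) (h₂ : MetricBtw y x z₂) (hw : MetricBtw z₁ w z₂)
    {i j : Fin 3} (hij : i ≠ j) (hxm : MetricBtw x m (![y, z₁, z₂] i))
    (hwm : MetricBtw w m (![y, z₁, z₂] j)) : MetricBtw y x w := by
  fin_cases i <;> fin_cases j
  · exact absurd rfl hij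
  · exact of_meet_base h₁ h₂ hw hxm hwm
  · exact of_meet_base h₂ h₁ hw.symm hxm hwm
  · exact of_meet_apex h₁ hxm hwm
  · exact absurd rfl hij
  · exact of_meet_crosswise h₁ hw hxm hwm
  · exact of_meet_apex h₂ hxm hwm
  · exact of_meet_crosswise h₂ hw.symm hxm hwm
  · exact absurd rfl hij

theorem of_apex_mem_fan (h₁ : MetricBtw y x z₁) (h₂ : MetricBtw y x z₂) (hw : MetricBtw z₁ w z₂)
    (ht : MetricBtw x t z₂ ∨ MetricBtw w t z₂) (hy : MetricBtw z₁ y t) : MetricBtw y x w := by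
  have xyz₂ : MetricBtw x y z₂ := by
    obtain hxt | hwt := ht
    · exact hxt.trans_left (hy.trans_left_right h₁.symm)
    · exact ((hw.trans_right hwt).trans_left hy).trans_left_right h₁.symm
  obtain rfl : x = y := xyz₂.antisymm h₂
  exact .refl_left x w

theorem of_base_mem_fan (h₁ : MetricBtw y x z₁) (h₂ : MetricBtw y x z₂) (hw : MetricBtw z₁ w z₂)
    (ht : MetricBtw x t z₂ ∨ MetricBtw w t z₂) (hz₁ : MetricBtw y z₁ t) : MetricBtw y x w := by
  have yz₁w : MetricBtw y z₁ w := by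
    obtain hxt | hwt := ht
    · exact ((h₂.trans_right hxt).trans_left hz₁).trans_right_left hw
    · exact hz₁.trans_right_left (hw.trans_right_left hwt)
  exact yz₁w.trans_left h₁

theorem exists_of_mem_fan (h₁ : MetricBtw y x z₁) (h₂ : MetricBtw y x z₂)
    (hw : MetricBtw z₁ w z₂) (k : Fin 3) :
    ∃ i j, i ≠ k ∧ j ≠ k ∧ i ≠ j ∧
      ∀ t, MetricBtw x t (![y, z₁, z₂] j) ∨ MetricBtw w t (![y, z₁, z₂] j) →
        MetricBtw (![y, z₁, z₂] i) (![y, z₁, z₂] k) t → MetricBtw y x w := by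
  fin_cases k
  · exact ⟨1, 2, by decide, by decide, by decide, fun t ↦ of_apex_mem_fan h₁ h₂ hw⟩
  · exact ⟨0, 2, by decide, by decide, by decide, fun t ↦ of_base_mem_fan h₁ h₂ hw⟩
  · exact ⟨0, 1, by decide, by decide, by decide, fun t ↦ of_base_mem_fan h₂ h₁ hw.symm⟩

end Cone

end MetricBtw

theorem Bicombing.metricBtw_of_metricBtw {S : Type*} [MetricSpace S] (G : Bicombing S)
    (hG : ∀ p q s, MetricBtw p (G.path p q s) q) {f : S → ℂ} (hf : Continuous f)
    (hf_inj : Injective f) {x y z₁ z₂ w : S} (h₁ : MetricBtw y x z₁) (h₂ : MetricBtw y x z₂)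
    (hw : MetricBtw z₁ w z₂) : MetricBtw y x w := by
  by_contra hyxw
  have disjoint (i j : Fin 3) (hij : i ≠ j) (s t : I) :
      G.path x (![y, z₁, z₂] i) s ≠ G.path w (![y, z₁, z₂] j) t := fun h ↦
    hyxw (.of_meet_of_ne h₁ h₂ hw hij (hG _ _ s) (h ▸ hG _ _ t))
  obtain ⟨k, hk⟩ := G.exists_forall_mem_range hf hf_inj disjoint
  obtain ⟨i, j, hik, hjk, hij, fan⟩ := MetricBtw.exists_of_mem_fan h₁ h₂ hw k
  obtain ⟨t, ht, s, hs⟩ := hk i j hik hjk hij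
  refine hyxw (fan t (ht.imp ?_ ?_) (hs ▸ hG _ _ s))
  · rintro ⟨r, rfl⟩
    exact hG _ _ r
  · rintro ⟨r, rfl⟩
    exact hG _ _ r

/-! ### Geodesics in Busemann spaces -/

section Geodesic

variable {S : Type*} [MetricSpace S] {γ γ' : ℝ → S} {a b : ℝ} {p m q p' q' : S}

theorem isGeodesicOn_of_dist_le
    (hγ : ∀ s ∈ Icc a b, ∀ t ∈ Icc a b, s ≤ t → dist (γ s) (γ t) ≤ t - s)
    (hab : b - a ≤ dist (γ a) (γ b)) : IsGeodesicOn γ a b := by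
  have dist_eq (s) (hs : s ∈ Icc a b) (t) (ht : t ∈ Icc a b) (hst : s ≤ t) :
      dist (γ s) (γ t) = t - s := by
    have ha : a ∈ Icc a b := left_mem_Icc.2 (hs.1.trans hs.2)
    have hb : b ∈ Icc a b := right_mem_Icc.2 (hs.1.trans hs.2)
    linarith [hγ s hs t ht hst, hγ a ha s hs hs.1, hγ t ht b hb ht.2,
      dist_triangle4 (γ a) (γ s) (γ t) (γ b)]
  intro s hs t ht
  obtain hst | hts := le_total s t
  · rw [dist_eq s hs t ht hst, abs_sub_comm, abs_of_nonneg (sub_nonneg.2 hst)]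
  · rw [dist_comm, dist_eq t ht s hs hts, abs_of_nonneg (sub_nonneg.2 hts)]

theorem IsGeodesicOn.dist_eq_sub (hγ : IsGeodesicOn γ a b) {s t : ℝ} (hs : a ≤ s) (hst : s ≤ t)
    (ht : t ≤ b) : dist (γ s) (γ t) = t - s := by
  rw [hγ s ⟨hs, hst.trans ht⟩ t ⟨hs.trans hst, ht⟩, abs_sub_comm,
    abs_of_nonneg (sub_nonneg.2 hst)]

theorem IsGeodesicOn.continuousOn (hγ : IsGeodesicOn γ a b) : ContinuousOn γ (Icc a b) :=
  (LipschitzOnWith.of_dist_le_mul (K := 1) fun s hs t ht ↦ by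
    rw [hγ s hs t ht, NNReal.coe_one, one_mul, Real.dist_eq]).continuousOn

theorem mul_dist_mem_Icc (s : I) (p q : S) : s * dist p q ∈ Icc 0 (dist p q) :=
  ⟨mul_nonneg s.2.1 dist_nonneg, mul_le_of_le_one_left dist_nonneg s.2.2⟩

namespace IsGeodesicFromTo

theorem concat (hγ : IsGeodesicFromTo γ p m) (hγ' : IsGeodesicFromTo γ' m q)
    (hm : MetricBtw p m q) :
    IsGeodesicFromTo (fun s ↦ if s ≤ dist p m then γ s else γ' (s - dist p m)) p q := by
  set l := dist p m
  have hpq : l + dist m q = dist p q := hm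
  have h0 : (if (0 : ℝ) ≤ l then γ 0 else γ' (0 - l)) = p := by
    rw [if_pos dist_nonneg, hγ.2.1]
  have h1 : (if dist p q ≤ l then γ (dist p q) else γ' (dist p q - l)) = q := by
    split_ifs with h
    · obtain rfl : m = q := dist_le_zero.1 (by linarith)
      exact hγ.2.2
    · rw [← hpq, add_sub_cancel_left, hγ'.2.2]
  refine ⟨isGeodesicOn_of_dist_le (fun s hs t ht hst ↦ ?_) ?_, h0, h1⟩
  · have hs₀ := hs.1
    have ht₁ := ht.2
    split_ifs with hsl htl htl
    · exact (hγ.1.dist_eq_sub hs₀ hst htl).le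
    · have dist_sm := hγ.1.dist_eq_sub hs₀ hsl le_rfl
      have dist_mt := hγ'.1.dist_eq_sub le_rfl (t := t - l) (by linarith) (by linarith)
      rw [hγ.2.2] at dist_sm
      rw [hγ'.2.1] at dist_mt
      linarith [dist_triangle (γ s) m (γ' (t - l))]
    · exact absurd (hst.trans htl) hsl
    · rw [hγ'.1.dist_eq_sub (by linarith) (by linarith) (by linarith), sub_sub_sub_cancel_right]
  · simp only [h0, h1, sub_zero, le_refl]

theorem reverse (hγ : IsGeodesicFromTo γ p q) :
    IsGeodesicFromTo (fun s ↦ γ (dist p q - s)) q p := by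
  rw [IsGeodesicFromTo, dist_comm q p]
  refine ⟨fun s hs t ht ↦ ?_, by simp [hγ.2.2], by simp [hγ.2.1]⟩
  rw [hγ.1 _ ⟨by linarith [hs.2], by linarith [hs.1]⟩ _ ⟨by linarith [ht.2], by linarith [ht.1]⟩,
    sub_sub_sub_cancel_left, abs_sub_comm]

theorem metricBtw (hγ : IsGeodesicFromTo γ p q) {t : ℝ} (ht : t ∈ Icc 0 (dist p q)) :
    MetricBtw p (γ t) q := by
  have dist_left := hγ.1.dist_eq_sub le_rfl ht.1 ht.2
  have dist_right := hγ.1.dist_eq_sub ht.1 ht.2 le_rfl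
  rw [hγ.2.1] at dist_left
  rw [hγ.2.2] at dist_right
  rw [MetricBtw, dist_left, dist_right, sub_zero, add_sub_cancel]

/-- A geodesic as a path on the unit interval, with constant speed `dist p q`. -/
def path (hγ : IsGeodesicFromTo γ p q) : Path p q where
  toFun s := γ (s * dist p q)
  continuous_toFun :=
    hγ.1.continuousOn.comp_continuous (by fun_prop) fun s ↦ mul_dist_mem_Icc s p q
  source' := by simp [hγ.2.1]
  target' := by simp [hγ.2.2]

theorem path_apply (hγ : IsGeodesicFromTo γ p q) (s : I) : hγ.path s = γ (s * dist p q) := rfl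

theorem dist_path_path (hγ : IsGeodesicFromTo γ p q) (s t : I) :
    dist (hγ.path s) (hγ.path t) = dist s t * dist p q := by
  rw [path_apply, path_apply, hγ.1 _ (mul_dist_mem_Icc s p q) _ (mul_dist_mem_Icc t p q),
    ← sub_mul, abs_mul, abs_of_nonneg (dist_nonneg (x := p)), Subtype.dist_eq, Real.dist_eq]

end IsGeodesicFromTo

namespace IsBusemannSpace

theorem dist_path_path_le (hS : IsBusemannSpace S) (hγ : IsGeodesicFromTo γ p q)
    (hγ' : IsGeodesicFromTo γ' p' q') (s : I) :
    dist (hγ.path s) (hγ'.path s) ≤ (1 - s) * dist p p' + s * dist q q' := by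
  have convex := hS.2 γ γ' 0 (dist p q) 0 (dist p' q') dist_nonneg dist_nonneg hγ.1 hγ'.1
  have bound := convex.2 (left_mem_Icc.2 zero_le_one) (right_mem_Icc.2 zero_le_one)
    (sub_nonneg.2 s.2.2) s.2.1 (sub_add_cancel _ _)
  simpa [IsGeodesicFromTo.path_apply, hγ.2.1, hγ.2.2, hγ'.2.1, hγ'.2.2] using bound

theorem path_eq_path (hS : IsBusemannSpace S) (hγ : IsGeodesicFromTo γ p q)
    (hγ' : IsGeodesicFromTo γ' p q) : hγ.path = hγ'.path := by
  ext s
  simpa using hS.dist_path_path_le hγ hγ' s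

theorem eqOn_of_isGeodesicFromTo (hS : IsBusemannSpace S) (hγ : IsGeodesicFromTo γ p q)
    (hγ' : IsGeodesicFromTo γ' p q) : EqOn γ γ' (Icc 0 (dist p q)) := by
  intro t ht
  obtain rfl | hpq := eq_or_ne p q
  · obtain rfl : t = 0 := by simpa using ht
    rw [hγ.2.1, hγ'.2.1]
  · have dist_ne : dist p q ≠ 0 := dist_ne_zero.2 hpq
    have := DFunLike.congr_fun (hS.path_eq_path hγ hγ')
      ⟨t / dist p q, div_nonneg ht.1 dist_nonneg, div_le_one_of_le₀ ht.2 dist_nonneg⟩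
    simpa only [IsGeodesicFromTo.path_apply, div_mul_cancel₀ _ dist_ne] using this

theorem mem_segment_iff (hS : IsBusemannSpace S) {G : Set S} (hG : IsGeodesicSegment p q G) :
    m ∈ G ↔ MetricBtw p m q := by
  obtain ⟨γ, hγ, rfl⟩ := hG
  refine ⟨by rintro ⟨t, ht, rfl⟩; exact hγ.metricBtw ht, fun hm ↦ ?_⟩
  obtain ⟨γ₁, hγ₁⟩ := hS.1 p m
  obtain ⟨γ₂, hγ₂⟩ := hS.1 m q
  have dist_mem : dist p m ∈ Icc 0 (dist p q) :=
    ⟨dist_nonneg, hm ▸ le_add_of_nonneg_right dist_nonneg⟩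
  refine ⟨dist p m, dist_mem, ?_⟩
  rw [hS.eqOn_of_isGeodesicFromTo hγ (hγ₁.concat hγ₂ hm) dist_mem]
  simp only [le_refl, if_true, hγ₁.2.2]

theorem continuous_path (hS : IsBusemannSpace S) {γ : S → S → ℝ → S}
    (hγ : ∀ p q, IsGeodesicFromTo (γ p q) p q) :
    Continuous fun a : (S × S) × I ↦ (hγ a.1.1 a.1.2).path a.2 := by
  refine continuous_iff_continuousAt.2 fun ⟨⟨p, q⟩, s⟩ ↦ ?_
  have dist_le (a : (S × S) × I) :
      dist ((hγ a.1.1 a.1.2).path a.2) ((hγ p q).path s) ≤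
        (1 - a.2) * dist a.1.1 p + a.2 * dist a.1.2 q + dist a.2 s * dist p q :=
    (dist_triangle _ ((hγ p q).path a.2) _).trans
      (add_le_add (hS.dist_path_path_le _ _ _) ((hγ p q).dist_path_path _ _).le)
  have continuous_bound : Continuous fun a : (S × S) × I ↦
      (1 - (a.2 : ℝ)) * dist a.1.1 p + a.2 * dist a.1.2 q + dist a.2 s * dist p q := by
    fun_prop
  refine tendsto_iff_dist_tendsto_zero.2 (squeeze_zero (fun _ ↦ dist_nonneg) dist_le ?_)
  simpa using continuous_bound.tendsto ((p, q), s)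

theorem exists_bicombing (hS : IsBusemannSpace S) :
    ∃ G : Bicombing S, ∀ p q s, MetricBtw p (G.path p q s) q := by
  choose γ hγ using hS.1
  refine ⟨⟨fun p q ↦ (hγ p q).path, fun p q ↦ ?_, hS.continuous_path hγ⟩,
    fun p q s ↦ (hγ p q).metricBtw (mul_dist_mem_Icc s p q)⟩
  rw [← hS.path_eq_path (hγ p q).reverse (hγ q p)]
  ext s
  simp only [Path.symm_apply, comp_apply, IsGeodesicFromTo.path_apply, coe_symm_eq, dist_comm q p,
    one_sub_mul]

end IsBusemannSpace

end Geodesic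

theorem busemann_surface_cone_convex_closed_general {S : Type*} [MetricSpace S]
    (hS : IsBusemannSpace S) {f : S → ℂ} (hf : Continuous f) (hf_inj : Injective f)
    (seg : S → S → Set S) (hseg : ∀ x y : S, IsGeodesicSegment x y (seg x y)) (x y : S) :
    SegConvex seg {z : S | x ∈ seg y z} ∧ IsClosed {z : S | x ∈ seg y z} := by
  obtain ⟨G, hG⟩ := hS.exists_bicombing
  have mem_seg_iff {p m q : S} : m ∈ seg p q ↔ MetricBtw p m q := hS.mem_segment_iff (hseg p q)
  simp only [SegConvex, subset_def, mem_ofPred_eq, mem_seg_iff]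
  refine ⟨fun z₁ h₁ z₂ h₂ w hw ↦ G.metricBtw_of_metricBtw hG hf hf_inj h₁ h₂ hw, ?_⟩
  exact isClosed_eq (by fun_prop) (by fun_prop)

/-- the cone `C(x,y) = {z : x ∈ [y,z]}` is convex and closed. -/
theorem busemann_surface_cone_convex_closed {S : Type*} [MetricSpace S]
    (hS : IsBusemannSurface S)
    (seg : S → S → Set S) (hseg : ∀ x y : S, IsGeodesicSegment x y (seg x y))
    (x y : S) (hxy : x ≠ y) :
    SegConvex seg {z : S | x ∈ seg y z} ∧ IsClosed {z : S | x ∈ seg y z} := by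
  obtain ⟨hB, ⟨e⟩⟩ := hS
  exact busemann_surface_cone_convex_closed_general hB
    (Complex.equivRealProdCLM.symm.continuous.comp e.continuous)
    (Complex.equivRealProdCLM.symm.injective.comp e.injective) seg hseg x y
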